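/- arXiv:2408.06020 — 2 statements merged into one kernel-verified Lean document; each statement's English description precedes it below -/
import Mathlib

section
/- Let k ≥ 3 and r ≥ 2 be integers and let a = (a_1,…,a_r) ∈ ℕ^r_{k−1}. Then the limit, as n → ∞ over multiples of rk, of δ(H(n,a))/C(n−1,k−1) exists and equals g_r(a). Consequently, g_r(k) = max_{a ∈ ℕ^r_{k−1}} g_r(a). -/
open Finset

def HyperUniform {V : Type*} (k : ℕ) (H : Finset (Finset V)) : Prop := ∀ e ∈ H, e.card = k

def IsPM {V : Type*} [Fintype V] (H M : Finset (Finset V)) : Prop :=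
  M ⊆ H ∧ (∀ e ∈ M, ∀ f ∈ M, e ≠ f → Disjoint e f) ∧ ∀ v : V, ∃ e ∈ M, v ∈ e

def hdeg {V : Type*} [DecidableEq V] (H : Finset (Finset V)) (v : V) : ℕ :=
  (H.filter (fun e => v ∈ e)).card

def IsVec (k r : ℕ) (a : ℕ → ℕ) : Prop :=
  (∀ i j : ℕ, i ≤ j → j < r → a i ≤ a j) ∧ (∑ i ∈ Finset.range r, a i) = k - 1

noncomputable def gfun (k r : ℕ) (a : ℕ → ℕ) : ℝ :=
  (((k - 1).factorial : ℝ) / (∏ i ∈ Finset.range r, ((a i).factorial : ℝ))) *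
    (∏ i ∈ Finset.range r, (((r * a i + 1 : ℕ) : ℝ) / ((r * k : ℕ) : ℝ)) ^ (a i)) *
    (1 + ((a 0 : ℝ) / ((r * a 0 + 1 : ℕ) : ℝ)) *
      ∑ i ∈ Finset.Ico 1 r, ((r * a i + 1 : ℕ) : ℝ) / ((a i + 1 : ℕ) : ℝ))

noncomputable def gThr (k r : ℕ) : ℝ :=
  sSup {x : ℝ | ∃ a : ℕ → ℕ, IsVec k r a ∧ x = gfun k r a}

def HVa {W : Type*} [Fintype W] [DecidableEq W] (r : ℕ) (P : ℕ → Finset W) (a : ℕ → ℕ) :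
    Finset (Finset W) :=
  (Finset.univ : Finset W).powerset.filter (fun e =>
    ∃ i ∈ Finset.range r, (e ∩ P i).card = a i + 1 ∧
      ∀ j ∈ Finset.range r, j ≠ i → (e ∩ P j).card = a j)

noncomputable def minDeg {W : Type*} [Fintype W] [DecidableEq W] (H : Finset (Finset W)) : ℕ :=
  sInf (Set.range fun v : W => hdeg H v)

def partHna (k r n : ℕ) (a : ℕ → ℕ) (i : ℕ) : Finset (Fin n) :=
  Finset.univ.filter (fun x : Fin n =>
    (∑ j ∈ Finset.range i, (r * a j + 1) * n / (r * k)) ≤ x.val ∧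
      x.val < ∑ j ∈ Finset.range (i + 1), (r * a j + 1) * n / (r * k))


theorem card_fam {ι W : Type*} [Fintype ι] [DecidableEq ι] [Fintype W] [DecidableEq W]
    (P : ι → Finset W) (hd : ∀ i j, i ≠ j → Disjoint (P i) (P j)) (hc : ∀ w, ∃ i, w ∈ P i)
    (Q : ι → Finset (Finset W)) (hQ : ∀ i, ∀ s ∈ Q i, s ⊆ P i) :
    ((Finset.univ : Finset (Finset W)).filter (fun e => ∀ i, e ∩ P i ∈ Q i)).card
      = ∏ i, (Q i).card := by
  rw [← Fintype.card_piFinset]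
  have key : ∀ f ∈ Fintype.piFinset Q, ∀ i, (Finset.univ.biUnion f) ∩ P i = f i := by
    intro f hf i
    rw [Fintype.mem_piFinset] at hf
    ext w
    simp only [mem_inter, mem_biUnion, mem_univ, true_and]
    constructor
    · rintro ⟨⟨j, hj⟩, hw⟩
      by_cases hij : j = i
      · subst hij; exact hj
      · exact absurd hw (Finset.disjoint_left.mp (hd j i hij) (hQ j _ (hf j) hj))
    · intro h
      exact ⟨⟨i, h⟩, hQ i _ (hf i) h⟩
  refine Finset.card_bij' (fun e _ => fun i => e ∩ P i) (fun f _ => Finset.univ.biUnion f) ?_ ?_ ?_ ?_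
  · intro e he
    simpa using he
  · intro f hf
    simp only [mem_filter, mem_univ, true_and]
    intro i
    rw [key f hf i]
    exact (Fintype.mem_piFinset.mp hf) i
  · intro e he
    ext w
    simp only [mem_inter, mem_biUnion, mem_univ, true_and]
    constructor
    · rintro ⟨j, h, _⟩; exact h
    · intro h
      obtain ⟨i, hi⟩ := hc w
      exact ⟨i, h, hi⟩
  · intro f hf
    funext i
    exact key f hf i

theorem card_star {W : Type*} [DecidableEq W] (S : Finset W) (v : W) (hv : v ∈ S) (b : ℕ) :
    (((S.powersetCard b).filter (fun e => v ∈ e)).card : ℝ)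
      = (b : ℝ) / S.card * (S.card.choose b : ℝ) := by
  have h1 : ((S.powersetCard b).filter (fun e => ¬ v ∈ e)) = (S.erase v).powersetCard b := by
    ext e
    simp only [mem_filter, mem_powersetCard, subset_erase]
    tauto
  have h2 := Finset.card_filter_add_card_filter_not (s := S.powersetCard b) (fun e => v ∈ e)
  rw [h1, card_powersetCard, card_powersetCard, Finset.card_erase_of_mem hv] at h2
  have hp : 0 < S.card := Finset.card_pos.mpr ⟨v, hv⟩
  obtain ⟨p, hp'⟩ : ∃ p, S.card = p + 1 := ⟨S.card - 1, by omega⟩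
  rw [hp'] at h2 ⊢
  rcases b with _ | b
  · simp at h2 ⊢
  · rw [Nat.choose_succ_succ] at h2
    simp only [Nat.add_sub_cancel] at h2
    have h3 : ((S.powersetCard (b+1)).filter (fun e => v ∈ e)).card = p.choose b := by
      simp only [Nat.succ_eq_add_one] at h2
      omega
    rw [h3]
    have h4 := Nat.add_one_mul_choose_eq p b
    have h5 : ((p:ℝ) + 1) * (p.choose b) = ((p+1).choose (b+1)) * ((b:ℝ)+1) := by exact_mod_cast h4
    push_cast
    field_simp
    linarith

/-- The degree profile vector. -/
def bvec (a : ℕ → ℕ) (i j : ℕ) : ℕ := if j = i then a j + 1 else a j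

theorem hdeg_formula {W : Type*} [Fintype W] [DecidableEq W] (r : ℕ) (P : ℕ → Finset W) (a : ℕ → ℕ)
    (hd : ∀ i < r, ∀ j < r, i ≠ j → Disjoint (P i) (P j)) (hc : ∀ w, ∃ i < r, w ∈ P i)
    (l : ℕ) (hl : l < r) (v : W) (hv : v ∈ P l) :
    (hdeg (HVa r P a) v : ℝ) = ∑ i ∈ range r, ((bvec a i l : ℝ) / ((P l).card : ℝ)) *
      ∏ j ∈ range r, (((P j).card.choose (bvec a i j) : ℕ) : ℝ) := by
  have h1 : (HVa r P a).filter (fun e => v ∈ e) = (range r).biUnion (fun i =>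
      (Finset.univ : Finset (Finset W)).filter (fun e => v ∈ e ∧ ∀ j < r, (e ∩ P j).card = bvec a i j)) := by
    ext e
    simp only [HVa, mem_filter, mem_biUnion, mem_powerset, subset_univ, true_and, mem_univ, mem_range]
    constructor
    · rintro ⟨⟨i, hi, h, h'⟩, hve⟩
      refine ⟨i, hi, hve, fun j hj => ?_⟩
      unfold bvec
      split_ifs with hji
      · subst hji; exact h
      · exact h' j hj hji
    · rintro ⟨i, hi, hve, h⟩
      refine ⟨⟨i, hi, by simpa [bvec] using h i hi, fun j hj hji => by simpa [bvec, hji] using h j hj⟩, hve⟩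
  unfold hdeg
  rw [h1, card_biUnion]
  · push_cast
    refine Finset.sum_congr rfl fun i hi => ?_
    have h2 := card_fam (ι := Fin r) (fun j => P j)
      (fun i j hij => hd i i.2 j j.2 (fun h => hij (Fin.ext h)))
      (fun w => by obtain ⟨i, hi, hw⟩ := hc w; exact ⟨⟨i, hi⟩, hw⟩)
      (fun j => ((P j).powersetCard (bvec a i j)).filter (fun e => (j:ℕ) = l → v ∈ e))
      (fun j s hs => (mem_powersetCard.mp (mem_filter.mp hs).1).1)
    have h3 : ((Finset.univ : Finset (Finset W)).filter (fun e => v ∈ e ∧ ∀ j < r, (e ∩ P j).card = bvec a i j)) =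
      ((Finset.univ : Finset (Finset W)).filter (fun e => ∀ j : Fin r, e ∩ P j ∈ ((P j).powersetCard (bvec a i j)).filter (fun e => (j:ℕ) = l → v ∈ e))) := by
      ext e
      simp only [mem_filter, mem_univ, true_and, mem_powersetCard, inter_subset_right, mem_inter]
      constructor
      · rintro ⟨hve, h⟩ j
        exact ⟨h j j.2, fun hjl => ⟨hve, by rw [hjl]; exact hv⟩⟩
      · intro h
        exact ⟨((h ⟨l, hl⟩).2 rfl).1, fun j hj => (h ⟨j, hj⟩).1⟩
    rw [h3]
    have h2' := congrArg (fun x : ℕ => (x : ℝ)) h2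
    simp only [Nat.cast_prod] at h2'
    refine (Eq.trans (by congr!) h2').trans ?_
    rw [← Finset.prod_range (fun j : ℕ => (((((P j).powersetCard (bvec a i j)).filter (fun e => j = l → v ∈ e)).card : ℕ) : ℝ))]
    have hlr : l ∈ range r := mem_range.mpr hl
    rw [← Finset.mul_prod_erase _ _ hlr, ← Finset.mul_prod_erase (range r) (fun j => (((P j).card.choose (bvec a i j) : ℕ) : ℝ)) hlr]
    rw [← mul_assoc]
    congr 1
    · simp only [true_imp_iff]
      exact card_star _ _ hv _
    · refine Finset.prod_congr rfl fun j hj => ?_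
      have hjl := (mem_erase.mp hj).1
      simp [hjl]
  · intro i hi i' hi' hne
    rw [Function.onFun, Finset.disjoint_left]
    intro e he he'
    simp only [mem_filter, mem_univ, true_and] at he he'
    have hir : i < r := by simpa using hi
    have e1 := he.2 i hir
    have e2 := he'.2 i hir
    rw [e1] at e2
    simp [bvec, hne] at e2

open Filter in
theorem choose_lim (F : Filter ℕ) (hF : F ≤ atTop) (m : ℕ → ℕ) (c : ℝ) (hm : Tendsto m F atTop)
    (hc : Tendsto (fun n => (m n : ℝ) / n) F (nhds c)) (b : ℕ) :
    Tendsto (fun n => ((m n).choose b : ℝ) / (n : ℝ) ^ b) F (nhds (c ^ b / b.factorial)) := by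
  have h0 : Tendsto (fun n : ℕ => (n : ℝ) * (1 / (n:ℝ))) atTop (nhds 1) := by
    refine tendsto_const_nhds.congr' ?_
    filter_upwards [eventually_gt_atTop 0] with n hn
    have : (n:ℝ) ≠ 0 := by positivity
    field_simp
  have h1 := (ProbabilityTheory.tendsto_choose_mul_pow_atTop b h0).comp hm
  have h2 := h1.mul (hc.pow b)
  have e : (1:ℝ) ^ b / b.factorial * c ^ b = c ^ b / b.factorial := by
    rw [one_pow]; ring
  rw [e] at h2
  refine h2.congr' ?_
  filter_upwards [hm.eventually (eventually_gt_atTop 0), hF (eventually_gt_atTop 0)] with n hn hn'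
  have : (m n:ℝ) ≠ 0 := by positivity
  have : (n:ℝ) ≠ 0 := by positivity
  simp only [Function.comp]
  rw [div_pow, div_pow, one_pow]
  field_simp

theorem part_card (k r n : ℕ) (a : ℕ → ℕ) (i : ℕ)
    (h : ∑ j ∈ Finset.range (i+1), (r * a j + 1) * n / (r * k) ≤ n) :
    (partHna k r n a i).card = (r * a i + 1) * n / (r * k) := by
  have h1 : (partHna k r n a i).map Fin.valEmbedding =
    Finset.Ico (∑ j ∈ Finset.range i, (r * a j + 1) * n / (r * k))
      (∑ j ∈ Finset.range (i+1), (r * a j + 1) * n / (r * k)) := by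
    ext x
    simp only [partHna, mem_map, mem_filter, mem_univ, true_and, Fin.valEmbedding_apply, mem_Ico]
    constructor
    · rintro ⟨y, hy, rfl⟩; exact hy
    · intro hx
      exact ⟨⟨x, lt_of_lt_of_le hx.2 h⟩, hx, rfl⟩
  rw [← Finset.card_map Fin.valEmbedding, h1, Nat.card_Ico, Finset.sum_range_succ, Nat.add_sub_cancel_left]

theorem part_disj (k r n : ℕ) (a : ℕ → ℕ) (i j : ℕ) (hij : i ≠ j) :
    Disjoint (partHna k r n a i) (partHna k r n a j) := by
  wlog h : i < j generalizing i j
  · exact (this j i hij.symm (by omega)).symm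
  rw [Finset.disjoint_left]
  intro x hx hx'
  simp only [partHna, mem_filter, mem_univ, true_and] at hx hx'
  have : ∑ j ∈ Finset.range (i+1), (r * a j + 1) * n / (r * k) ≤
    ∑ j ∈ Finset.range j, (r * a j + 1) * n / (r * k) :=
    Finset.sum_le_sum_of_subset (Finset.range_mono h)
  omega

theorem part_cover (k r n : ℕ) (a : ℕ → ℕ)
    (h : ∑ j ∈ Finset.range r, (r * a j + 1) * n / (r * k) = n) (x : Fin n) :
    ∃ i < r, x ∈ partHna k r n a i := by
  have hex : ∃ i, x.val < ∑ j ∈ Finset.range i, (r * a j + 1) * n / (r * k) := ⟨r, by rw [h]; exact x.2⟩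
  classical
  have h1 := Nat.find_spec hex
  have h3 : Nat.find hex ≤ r := Nat.find_min' hex (by rw [h]; exact x.2)
  rcases hf : Nat.find hex with _ | i
  · rw [hf] at h1; simp at h1
  · have h2 := Nat.find_min hex (m := i) (by omega)
    rw [hf] at h1
    refine ⟨i, by omega, ?_⟩
    simp only [partHna, mem_filter, mem_univ, true_and]
    exact ⟨by omega, h1⟩

theorem sum_bvec (k r : ℕ) (hk : 3 ≤ k) (a : ℕ → ℕ) (ha : IsVec k r a) (i : ℕ) (hi : i < r) :
    ∑ j ∈ range r, bvec a i j = k := by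
  have : ∀ j, bvec a i j = a j + if j = i then 1 else 0 := by
    intro j; unfold bvec; split_ifs <;> rfl
  simp only [this, Finset.sum_add_distrib, ha.2]
  rw [Finset.sum_ite_eq' (range r) i, if_pos (mem_range.mpr hi)]
  omega

/-- Part density. -/
noncomputable def cden (k r : ℕ) (a : ℕ → ℕ) (i : ℕ) : ℝ :=
  ((r * a i + 1 : ℕ) : ℝ) / ((r * k : ℕ) : ℝ)

theorem prod_bvec (r : ℕ) (a : ℕ → ℕ) (c : ℕ → ℝ) (i : ℕ) (hi : i < r) :
    ∏ j ∈ range r, c j ^ (bvec a i j) / ((bvec a i j).factorial : ℝ) =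
      (∏ j ∈ range r, c j ^ (a j) / ((a j).factorial : ℝ)) * (c i / (a i + 1)) := by
  have hir := mem_range.mpr hi
  rw [← Finset.mul_prod_erase _ _ hir,
    ← Finset.mul_prod_erase (range r) (fun j => c j ^ (a j) / ((a j).factorial : ℝ)) hir]
  have h1 : ∏ j ∈ (range r).erase i, c j ^ (bvec a i j) / ((bvec a i j).factorial : ℝ) =
    ∏ j ∈ (range r).erase i, c j ^ (a j) / ((a j).factorial : ℝ) := by
    refine Finset.prod_congr rfl fun j hj => ?_
    have := (mem_erase.mp hj).1
    simp [bvec, this]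
  rw [h1]
  simp only [bvec, if_true, Nat.factorial_succ, pow_succ]
  push_cast
  have : ((a i).factorial : ℝ) ≠ 0 := by positivity
  field_simp

/-- Limiting degree of a vertex in part l divided by n^(k-1). -/
noncomputable def Dlim (k r : ℕ) (a : ℕ → ℕ) (l : ℕ) : ℝ :=
  ∑ i ∈ range r, ((bvec a i l : ℝ) / cden k r a l) *
    ∏ j ∈ range r, cden k r a j ^ (bvec a i j) / ((bvec a i j).factorial : ℝ)

theorem cden_pos (k r : ℕ) (hk : 3 ≤ k) (hr : 2 ≤ r) (a : ℕ → ℕ) (i : ℕ) : 0 < cden k r a i := by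
  unfold cden
  have : 0 < r * k := by positivity
  have : 0 < ((r * k : ℕ) : ℝ) := by exact_mod_cast this
  positivity

theorem Dlim_eq (k r : ℕ) (hk : 3 ≤ k) (hr : 2 ≤ r) (a : ℕ → ℕ) (l : ℕ) (hl : l < r) :
    Dlim k r a l = (∏ j ∈ range r, cden k r a j ^ (a j) / ((a j).factorial : ℝ)) *
      (1 + (a l : ℝ) / cden k r a l * ∑ i ∈ (range r).erase l, cden k r a i / (a i + 1)) := by
  unfold Dlim
  have hc := cden_pos k r hk hr a
  have hlr := mem_range.mpr hl
  set P := (∏ j ∈ range r, cden k r a j ^ (a j) / ((a j).factorial : ℝ)) with hP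
  have h1 : ∀ i ∈ range r, ((bvec a i l : ℝ) / cden k r a l) *
    ∏ j ∈ range r, cden k r a j ^ (bvec a i j) / ((bvec a i j).factorial : ℝ) =
    ((bvec a i l : ℝ) / cden k r a l) * (P * (cden k r a i / (a i + 1))) := by
    intro i hi
    rw [prod_bvec r a _ i (mem_range.mp hi)]
  rw [Finset.sum_congr rfl h1, ← Finset.add_sum_erase _ _ hlr, mul_add, Finset.mul_sum, Finset.mul_sum]
  congr 1
  · have := (hc l).ne'
    simp only [bvec, if_true]
    push_cast
    field_simp
  · refine Finset.sum_congr rfl fun i hi => ?_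
    have : l ≠ i := (mem_erase.mp hi).1.symm
    simp only [bvec, this, if_false]
    ring

theorem Dlim_zero (k r : ℕ) (hk : 3 ≤ k) (hr : 2 ≤ r) (a : ℕ → ℕ) :
    Dlim k r a 0 * ((k-1).factorial : ℝ) = gfun k r a := by
  rw [Dlim_eq k r hk hr a 0 (by omega), gfun]
  have hK : 0 < r * k := by positivity
  have hK : 0 < ((r * k : ℕ) : ℝ) := by exact_mod_cast hK
  have h1 : (range r).erase 0 = Ico 1 r := by
    ext x; simp; omega
  rw [h1, Finset.prod_div_distrib]
  have h2 : (a 0 : ℝ) / cden k r a 0 * ∑ i ∈ Ico 1 r, cden k r a i / (a i + 1) =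
    ((a 0 : ℝ) / ((r * a 0 + 1 : ℕ) : ℝ)) *
      ∑ i ∈ Finset.Ico 1 r, ((r * a i + 1 : ℕ) : ℝ) / ((a i + 1 : ℕ) : ℝ) := by
    rw [Finset.mul_sum, Finset.mul_sum]
    refine Finset.sum_congr rfl fun i hi => ?_
    have : ((r * a 0 + 1 : ℕ) : ℝ) ≠ 0 := by positivity
    have : ((a i + 1 : ℕ) : ℝ) ≠ 0 := by positivity
    unfold cden
    rw [← Nat.cast_add_one]
    field_simp
  rw [h2]
  unfold cden
  ring

theorem Dlim_le (k r : ℕ) (hk : 3 ≤ k) (hr : 2 ≤ r) (a : ℕ → ℕ) (ha : IsVec k r a) (l : ℕ) (hl : l < r) :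
    Dlim k r a 0 ≤ Dlim k r a l := by
  rcases Nat.eq_zero_or_pos l with rfl | hl0
  · exact le_rfl
  have hc := cden_pos k r hk hr a
  rw [Dlim_eq k r hk hr a 0 (by omega), Dlim_eq k r hk hr a l hl]
  refine mul_le_mul_of_nonneg_left ?_ (Finset.prod_nonneg fun j _ => by have := hc j; positivity)
  have hK : 0 < r * k := by positivity
  have hK : 0 < ((r * k : ℕ) : ℝ) := by exact_mod_cast hK
  set y : ℕ → ℝ := fun i => ((r:ℝ) * a i + 1) / (a i + 1) with hy
  have hterm : ∀ i, cden k r a i / (a i + 1) = y i / ((r * k : ℕ) : ℝ) := by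
    intro i
    simp only [hy, cden]
    push_cast
    ring
  have hfac : ∀ i (s : Finset ℕ), (a i : ℝ) / cden k r a i * ∑ j ∈ s, cden k r a j / (a j + 1) =
      a i / (r * a i + 1) * ∑ j ∈ s, y j := by
    intro i s
    simp only [hterm]
    rw [← Finset.sum_div]
    unfold cden
    push_cast at hK ⊢
    have : (r:ℝ) * a i + 1 ≠ 0 := by positivity
    field_simp
  rw [hfac, hfac]
  set S := ∑ j ∈ range r, y j with hS
  have hS0 : ∑ j ∈ (range r).erase 0, y j = S - y 0 := by
    rw [hS, ← Finset.add_sum_erase _ _ (mem_range.mpr (by omega : 0 < r))]; ring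
  have hSl : ∑ j ∈ (range r).erase l, y j = S - y l := by
    rw [hS, ← Finset.add_sum_erase _ _ (mem_range.mpr hl)]; ring
  rw [hS0, hSl]
  have hr1 : (2:ℝ) ≤ r := by exact_mod_cast hr
  have hmono : ∀ j ∈ range r, y 0 ≤ y j := by
    intro j hj
    have h := ha.1 0 j (Nat.zero_le _) (mem_range.mp hj)
    have h : (a 0 : ℝ) ≤ a j := by exact_mod_cast h
    simp only [hy]
    rw [div_le_div_iff₀ (by positivity) (by positivity)]
    nlinarith
  have hyr : ∀ j, y j ≤ r := by
    intro j
    simp only [hy]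
    rw [div_le_iff₀ (by positivity)]
    nlinarith
  have hy1 : 1 ≤ y 0 := by
    simp only [hy]
    rw [le_div_iff₀ (by positivity)]
    have : (0:ℝ) ≤ a 0 := by positivity
    nlinarith
  have hSge : ((r:ℝ) - 1) * y 0 + y l ≤ S := by
    rw [hS, ← Finset.add_sum_erase _ _ (mem_range.mpr hl)]
    have h := Finset.card_nsmul_le_sum ((range r).erase l) y (y 0)
      (fun j hj => hmono j (mem_of_mem_erase hj))
    rw [Finset.card_erase_of_mem (mem_range.mpr hl), card_range, nsmul_eq_mul,
      Nat.cast_sub (by omega)] at h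
    push_cast at h
    linarith
  have hkey : y 0 * y l ≤ S := by
    nlinarith [hyr l, hyr 0]
  have hab := ha.1 0 l (Nat.zero_le _) hl
  have hab : (a 0 : ℝ) ≤ a l := by exact_mod_cast hab
  have e0 : ∀ i, (a i : ℝ) / (r * a i + 1) * (S - y i) = (a i : ℝ) / (r * a i + 1) * S - a i / (a i + 1) := by
    intro i
    simp only [hy]
    have : (r:ℝ) * a i + 1 ≠ 0 := by positivity
    field_simp
  rw [e0, e0]
  have e1 : (1 + ((a l : ℝ) / (r * a l + 1) * S - a l / (a l + 1))) - (1 + ((a 0 : ℝ) / (r * a 0 + 1) * S - a 0 / (a 0 + 1)))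
    = ((a l : ℝ) - a 0) / ((r * a l + 1) * (r * a 0 + 1)) * (S - y 0 * y l) := by
    simp only [hy]
    have : (r:ℝ) * a l + 1 ≠ 0 := by positivity
    have : (r:ℝ) * a 0 + 1 ≠ 0 := by positivity
    field_simp
    ring
  have e2 : 0 ≤ ((a l : ℝ) - a 0) / ((r * a l + 1) * (r * a 0 + 1)) * (S - y 0 * y l) :=
    mul_nonneg (div_nonneg (by linarith) (by positivity)) (by linarith)
  linarith

theorem gset_finite (k r : ℕ) : {x : ℝ | ∃ b : ℕ → ℕ, IsVec k r b ∧ x = gfun k r b}.Finite := by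
  classical
  refine Set.Finite.subset ((Set.finite_range
    (fun f : Fin r → Fin (k - 1 + 1) => fun j : ℕ => if h : j < r then (f ⟨j, h⟩ : ℕ) else 0)).image
      (gfun k r)) ?_
  rintro x ⟨b, hb, rfl⟩
  have hle : ∀ j, j < r → b j ≤ k - 1 := by
    intro j hj
    rw [← hb.2]
    exact Finset.single_le_sum (f := b) (fun _ _ => Nat.zero_le _) (mem_range.mpr hj)
  refine ⟨fun j : ℕ => if h : j < r then b j else 0,
    ⟨fun j => ⟨b j, Nat.lt_succ_of_le (hle j j.2)⟩, rfl⟩, ?_⟩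
  rcases Nat.eq_zero_or_pos r with rfl | hr
  · simp [gfun]
  unfold gfun
  beta_reduce
  have hE : ∀ j, j < r → (if h : j < r then b j else 0) = b j := fun j hj => by simp [hj]
  rw [hE 0 hr]
  congr 1
  · congr 1
    · congr 1
      exact Finset.prod_congr rfl fun j hj => by rw [hE j (mem_range.mp hj)]
    · exact Finset.prod_congr rfl fun j hj => by rw [hE j (mem_range.mp hj)]
  · congr 2
    exact Finset.sum_congr rfl fun j hj => by rw [hE j (mem_Ico.mp hj).2]

/-- Exact degree of a vertex in part l. -/
noncomputable def dl (k r : ℕ) (a : ℕ → ℕ) (l n : ℕ) : ℝ :=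
  ∑ i ∈ range r, ((bvec a i l : ℝ) / (((r * a l + 1) * n / (r * k) : ℕ) : ℝ)) *
    ∏ j ∈ range r, (((((r * a j + 1) * n / (r * k) : ℕ)).choose (bvec a i j) : ℕ) : ℝ)

open Filter in
theorem dl_lim (k r : ℕ) (hk : 3 ≤ k) (hr : 2 ≤ r) (a : ℕ → ℕ) (ha : IsVec k r a) (l : ℕ) :
    Tendsto (fun n : ℕ => dl k r a l n / (n:ℝ) ^ (k-1)) (atTop ⊓ principal {n : ℕ | r * k ∣ n})
      (nhds (Dlim k r a l)) := by
  set F := (atTop ⊓ principal {n : ℕ | r * k ∣ n}) with hF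
  have hFle : F ≤ atTop := inf_le_left
  have hdvd : ∀ᶠ n in F, r * k ∣ n := by
    have : F ≤ principal {n : ℕ | r * k ∣ n} := inf_le_right
    exact this (mem_principal_self _)
  have hK : 0 < r * k := by positivity
  have hpos : ∀ᶠ n in F, 0 < n := hFle (eventually_gt_atTop 0)
  have hm : ∀ j, Tendsto (fun n => (r * a j + 1) * n / (r * k)) F atTop := by
    intro j
    have h : Tendsto (fun n : ℕ => n / (r * k)) F atTop := (Nat.tendsto_div_const_atTop hK.ne').mono_left hFle
    refine tendsto_atTop_mono (fun n => ?_) h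
    exact Nat.div_le_div_right (Nat.le_mul_of_pos_left _ (Nat.succ_pos _))
  have hc : ∀ j, Tendsto (fun n : ℕ => (((r * a j + 1) * n / (r * k) : ℕ) : ℝ) / n) F (nhds (cden k r a j)) := by
    intro j
    refine tendsto_const_nhds.congr' ?_
    filter_upwards [hdvd, hpos] with n hn hn0
    rw [Nat.cast_div (Dvd.dvd.mul_left hn _) (by exact_mod_cast hK.ne')]
    have : (n:ℝ) ≠ 0 := by positivity
    unfold cden
    push_cast
    field_simp
  have hmain : Tendsto (fun n : ℕ => ∑ i ∈ range r, ((bvec a i l : ℝ) / ((((r * a l + 1) * n / (r * k) : ℕ) : ℝ) / n)) *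
    ∏ j ∈ range r, ((((((r * a j + 1) * n / (r * k) : ℕ)).choose (bvec a i j) : ℕ) : ℝ) / (n:ℝ)^(bvec a i j))) F (nhds (Dlim k r a l)) := by
    refine tendsto_finsetSum _ fun i hi => ?_
    refine (tendsto_const_nhds.div (hc l) (cden_pos k r hk hr a l).ne').mul ?_
    exact tendsto_finsetProd _ fun j hj => choose_lim F hFle _ _ (hm j) (hc j) _
  refine hmain.congr' ?_
  filter_upwards [hpos] with n hn
  have hn' : (n:ℝ) ≠ 0 := by positivity
  unfold dl
  rw [Finset.sum_div]
  refine Finset.sum_congr rfl fun i hi => ?_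
  rw [Finset.prod_div_distrib, Finset.prod_pow_eq_pow_sum, sum_bvec k r hk a ha i (mem_range.mp hi)]
  have : (n:ℝ)^k = (n:ℝ)^(k-1) * n := by rw [← pow_succ]; congr 1; omega
  rw [this, div_div_eq_mul_div]
  field_simp

open Filter in
theorem choose_pred_lim (k : ℕ) :
    Tendsto (fun n : ℕ => ((n-1).choose (k-1) : ℝ) / (n:ℝ)^(k-1)) atTop (nhds (1 / ((k-1).factorial : ℝ))) := by
  have h := choose_lim atTop le_rfl (fun n => n - 1) 1 (tendsto_sub_atTop_nat 1) (by
    have h : Tendsto (fun n : ℕ => 1 - 1 / (n:ℝ)) atTop (nhds (1 - 0)) :=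
      tendsto_const_nhds.sub tendsto_one_div_atTop_nhds_zero_nat
    rw [sub_zero] at h
    refine h.congr' ?_
    filter_upwards [eventually_gt_atTop 0] with n hn
    have : (n:ℝ) ≠ 0 := by positivity
    rw [Nat.cast_sub (by omega)]
    push_cast
    field_simp) (k-1)
  simpa using h

theorem minDeg_facts (k r : ℕ) (hk : 3 ≤ k) (hr : 2 ≤ r) (a : ℕ → ℕ) (ha : IsVec k r a) (n : ℕ)
    (hn : 0 < n) (hdvd : r * k ∣ n) :
    (minDeg (HVa r (partHna k r n a) a) : ℝ) ≤ dl k r a 0 n ∧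
      ∃ l < r, (minDeg (HVa r (partHna k r n a) a) : ℝ) = dl k r a l n := by
  have hK : 0 < r * k := by positivity
  have hsum : ∑ j ∈ Finset.range r, (r * a j + 1) * n / (r * k) = n := by
    obtain ⟨t, rfl⟩ := hdvd
    have : ∀ j, (r * a j + 1) * (r * k * t) / (r * k) = (r * a j + 1) * t := by
      intro j
      rw [show (r * a j + 1) * (r * k * t) = (r * k) * ((r * a j + 1) * t) by ring, Nat.mul_div_cancel_left _ hK]
    simp only [this]
    rw [← Finset.sum_mul, Finset.sum_add_distrib, ← Finset.mul_sum, ha.2]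
    simp only [sum_const, card_range, smul_eq_mul, mul_one]
    obtain ⟨q, rfl⟩ : ∃ q, k = q + 1 := ⟨k - 1, by omega⟩
    simp only [Nat.add_sub_cancel]
    ring
  have hcard : ∀ i < r, (partHna k r n a i).card = (r * a i + 1) * n / (r * k) := by
    intro i hi
    refine part_card k r n a i ?_
    calc _ ≤ ∑ j ∈ Finset.range r, (r * a j + 1) * n / (r * k) :=
          Finset.sum_le_sum_of_subset (Finset.range_mono hi)
      _ = n := hsum
  have hdeg' : ∀ l < r, ∀ v ∈ partHna k r n a l, (hdeg (HVa r (partHna k r n a) a) v : ℝ) = dl k r a l n := by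
    intro l hl v hv
    rw [hdeg_formula r (partHna k r n a) a (fun i _ j _ hij => part_disj k r n a i j hij)
      (part_cover k r n a hsum) l hl v hv, dl]
    refine Finset.sum_congr rfl fun i hi => ?_
    rw [hcard l hl]
    congr 1
    exact Finset.prod_congr rfl fun j hj => by rw [hcard j (mem_range.mp hj)]
  constructor
  · have hne : (partHna k r n a 0).Nonempty := by
      rw [← Finset.card_pos, hcard 0 (by omega)]
      exact Nat.div_pos ((Nat.le_of_dvd hn hdvd).trans (Nat.le_mul_of_pos_left _ (Nat.succ_pos _))) hK
    obtain ⟨v, hv⟩ := hne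
    rw [← hdeg' 0 (by omega) v hv]
    exact_mod_cast Nat.sInf_le (Set.mem_range_self v)
  · have : Nonempty (Fin n) := ⟨⟨0, hn⟩⟩
    obtain ⟨v, hv⟩ := Nat.sInf_mem (Set.range_nonempty (fun v : Fin n => hdeg (HVa r (partHna k r n a) a) v))
    obtain ⟨l, hl, hvl⟩ := part_cover k r n a hsum v
    refine ⟨l, hl, ?_⟩
    rw [← hdeg' l hl v hvl]
    unfold minDeg
    rw [← hv]

open Filter in
theorem minDeg_lim (k r : ℕ) (hk : 3 ≤ k) (hr : 2 ≤ r) (a : ℕ → ℕ) (ha : IsVec k r a) :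
    Tendsto (fun n : ℕ => (minDeg (HVa r (partHna k r n a) a) : ℝ) / (n:ℝ) ^ (k-1))
      (atTop ⊓ principal {n : ℕ | r * k ∣ n}) (nhds (Dlim k r a 0)) := by
  have hdvd : ∀ᶠ n in (atTop ⊓ principal {n : ℕ | r * k ∣ n}), r * k ∣ n :=
    (inf_le_right : (atTop ⊓ principal {n : ℕ | r * k ∣ n}) ≤ _) (mem_principal_self _)
  have hpos : ∀ᶠ n in (atTop ⊓ principal {n : ℕ | r * k ∣ n}), 0 < n :=
    (inf_le_left : (atTop ⊓ principal {n : ℕ | r * k ∣ n}) ≤ _) (eventually_gt_atTop 0)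
  rw [tendsto_order]
  constructor
  · intro x hx
    have hall : ∀ᶠ n in (atTop ⊓ principal {n : ℕ | r * k ∣ n}), ∀ l ∈ range r, x < dl k r a l n / (n:ℝ)^(k-1) := by
      rw [Filter.eventually_all_finset]
      intro l hl
      exact (tendsto_order.mp (dl_lim k r hk hr a ha l)).1 x
        (lt_of_lt_of_le hx (Dlim_le k r hk hr a ha l (mem_range.mp hl)))
    filter_upwards [hall, hdvd, hpos] with n h1 h2 h3
    obtain ⟨l, hl, e⟩ := (minDeg_facts k r hk hr a ha n h3 h2).2
    rw [e]
    exact h1 l (mem_range.mpr hl)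
  · intro x hx
    filter_upwards [(tendsto_order.mp (dl_lim k r hk hr a ha 0)).2 x hx, hdvd, hpos] with n h1 h2 h3
    refine lt_of_le_of_lt ?_ h1
    have := (minDeg_facts k r hk hr a ha n h3 h2).1
    gcongr

theorem min_degree_limit (k r : ℕ) (hk : 3 ≤ k) (hr : 2 ≤ r) (a : ℕ → ℕ) (ha : IsVec k r a) :
    Filter.Tendsto
      (fun n : ℕ => (minDeg (HVa r (partHna k r n a) a) : ℝ) / (((n - 1).choose (k - 1) : ℕ) : ℝ))
      (Filter.atTop ⊓ Filter.principal {n : ℕ | r * k ∣ n}) (nhds (gfun k r a)) ∧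
    IsGreatest {x : ℝ | ∃ b : ℕ → ℕ, IsVec k r b ∧ x = gfun k r b} (gThr k r) := by
  constructor
  · have h1 := minDeg_lim k r hk hr a ha
    have h2 := (choose_pred_lim k).mono_left
      (inf_le_left : (Filter.atTop ⊓ Filter.principal {n : ℕ | r * k ∣ n}) ≤ _)
    have h3 := h1.div h2 (by positivity)
    rw [div_div_eq_mul_div, div_one, Dlim_zero k r hk hr a] at h3
    refine h3.congr' ?_
    have hpos : ∀ᶠ n in (Filter.atTop ⊓ Filter.principal {n : ℕ | r * k ∣ n}), 0 < n :=
      (inf_le_left : (Filter.atTop ⊓ Filter.principal {n : ℕ | r * k ∣ n}) ≤ _) (Filter.eventually_gt_atTop 0)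
    filter_upwards [hpos] with n hn
    have : (n:ℝ) ^ (k-1) ≠ 0 := by positivity
    simp only [Pi.div_apply]
    exact div_div_div_cancel_right₀ this _ _
  · have hne : {x : ℝ | ∃ b : ℕ → ℕ, IsVec k r b ∧ x = gfun k r b}.Nonempty := ⟨_, a, ha, rfl⟩
    exact ⟨hne.csSup_mem (gset_finite k r), fun x hx => le_csSup (gset_finite k r).bddAbove hx⟩
end

section
/- Let k ≥ 3 and r ≥ 2 be integers and let a = (a_1,…,a_r) ∈ ℕ^r_{k−1}. For every θ > 0 there exists n_0 such that the following holds for all n ≥ n_0: if V = (V_1,…,V_r) is a partition of an n-element vertex set with |V_i| = (1+ε_i)·(r·a_i+1)·n/(rk) for each i ∈ [r], and ε := max_{1 ≤ i ≤ r} |ε_i| ≤ 1/(2k), then δ(H(V,a)) ≤ (1 + 4kε + θ)·C(n−1,k−1)·g_r(a). -/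
open Finset

lemma aux_pow (m : ℕ) (k : ℕ) (hm : m ≤ k) (E : ℝ) (hE : 0 ≤ E) (hE2 : (k:ℝ) * E ≤ 1/2) :
    (1 + E) ^ m ≤ 1 + 2 * k * E := by
  have h1 : (1 + E) ^ m ≤ (1 + E) ^ k := pow_le_pow_right₀ (by linarith) hm
  have h2 : (1 + E) ^ k ≤ Real.exp (k * E) := by
    rw [Real.exp_nat_mul]
    exact pow_le_pow_left₀ (by linarith) (by linarith [Real.add_one_le_exp E]) _
  have hx : 0 ≤ (k:ℝ) * E := by positivity
  have h3 : Real.exp (k * E) * (1 - k * E) ≤ 1 := by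
    have := Real.add_one_le_exp (-((k:ℝ) * E))
    calc Real.exp (k * E) * (1 - k * E) ≤ Real.exp (k * E) * Real.exp (-(k * E)) :=
          mul_le_mul_of_nonneg_left (by linarith) (Real.exp_pos _).le
      _ = 1 := by rw [← Real.exp_add]; simp
  nlinarith [Real.exp_pos ((k:ℝ) * E)]

lemma aux_choose (m : ℕ) (t : ℝ) (ht : 0 < t) : ∃ n₀ : ℕ, ∀ n : ℕ, n₀ ≤ n →
    1 ≤ n ∧ (n : ℝ) ^ m ≤ (1 + t) * (((n - 1).choose m : ℕ) : ℝ) * (m.factorial : ℝ) := by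
  obtain ⟨N, hN⟩ := exists_nat_ge ((m:ℝ) * m * (1 + t) / t)
  refine ⟨N + m + 1, fun n hn => ⟨by omega, ?_⟩⟩
  have hn0 : (0:ℝ) < n := by exact_mod_cast (by omega : 0 < n)
  have hNn : (N:ℝ) ≤ n := by exact_mod_cast (by omega : N ≤ n)
  have h1 := Nat.pow_sub_le_descFactorial (n - 1) m
  rw [Nat.descFactorial_eq_factorial_mul_choose, show n - 1 + 1 - m = n - m by omega] at h1
  have h2 : ((n:ℝ) - m) ^ m ≤ (m.factorial : ℝ) * ((n-1).choose m : ℕ) := by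
    rw [← Nat.cast_sub (by omega)]; exact_mod_cast h1
  have h3 := one_add_mul_le_pow (a := -((m:ℝ) / n)) (by
    have : (m:ℝ)/n ≤ 1 := by
      rw [div_le_one hn0]; exact_mod_cast (by omega : m ≤ n)
    linarith) m
  have h4 : ((n:ℝ) - m) ^ m = n ^ m * (1 + -((m:ℝ)/n)) ^ m := by
    rw [← mul_pow]; congr 1; field_simp; ring
  have h5 : (m:ℝ) * m * (1 + t) ≤ n * t := by
    have := hN.trans hNn
    rwa [div_le_iff₀ ht] at this
  have h6 : 1 ≤ (1 + t) * (1 + (m:ℝ) * -((m:ℝ)/n)) := by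
    have : (m:ℝ) * (m / n) * (1 + t) ≤ t := by
      rw [show (m:ℝ) * (m / n) * (1 + t) = (m:ℝ) * m * (1 + t) / n by ring, div_le_iff₀ hn0]
      linarith
    nlinarith
  calc (n:ℝ)^m ≤ (n:ℝ)^m * ((1 + t) * (1 + (m:ℝ) * -((m:ℝ)/n))) :=
        le_mul_of_one_le_right (by positivity) h6
    _ = (1 + t) * ((n:ℝ)^m * (1 + (m:ℝ) * -((m:ℝ)/n))) := by ring
    _ ≤ (1 + t) * ((n:ℝ)^m * (1 + -((m:ℝ)/n))^m) := by gcongr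
    _ ≤ (1 + t) * ((m.factorial : ℝ) * ((n-1).choose m : ℕ)) := by rw [← h4]; gcongr
    _ = _ := by ring

lemma aux_count {n : ℕ} (r : ℕ) (P : ℕ → Finset (Fin n)) (v : Fin n) (c : ℕ → ℕ)
    (hcov : ∀ x : Fin n, ∃ i, i < r ∧ x ∈ P i) (S : Finset (Finset (Fin n)))
    (hS : ∀ e ∈ S, v ∈ e ∧ ∀ j < r, (e.erase v ∩ P j).card = c j) :
    S.card ≤ ∏ j ∈ range r, (P j).card.choose (c j) := by
  have : ∏ j ∈ range r, (P j).card.choose (c j)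
      = ((range r).pi (fun j => powersetCard (c j) (P j))).card := by
    rw [card_pi]; simp
  rw [this]
  refine card_le_card_of_injOn (fun e j _ => e.erase v ∩ P j) ?_ ?_
  · intro e he
    simp only [Finset.mem_coe, Finset.mem_pi, mem_powersetCard]
    intro j hj
    exact ⟨inter_subset_right, (hS e he).2 j (mem_range.1 hj)⟩
  · intro e he f hf hef
    ext x
    by_cases hx : x = v
    · subst hx; simp [(hS e he).1, (hS f hf).1]
    · obtain ⟨i, hi, hxi⟩ := hcov x
      have := congrFun (congrFun hef i) (mem_range.2 hi)
      have h2 := Finset.ext_iff.1 this x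
      simpa [hx, hxi] using h2

/-- one vertex moved from class `0` to class `i` -/
def shiftVec (a : ℕ → ℕ) (i : ℕ) : ℕ → ℕ := fun j =>
  if j = 0 then a 0 - 1 else if j = i then a i + 1 else a j

lemma shift_prod {M : Type*} [CommMonoid M] (r i : ℕ) (a : ℕ → ℕ) (hi : 1 ≤ i) (hir : i < r)
    (F : ℕ → ℕ → M) :
    (∏ j ∈ range r, F j (shiftVec a i j)) * (F 0 (a 0) * F i (a i)) =
      (∏ j ∈ range r, F j (a j)) * (F 0 (a 0 - 1) * F i (a i + 1)) := by
  have h0 : 0 ∈ range r := by simp; omega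
  have h1 : i ∈ (range r).erase 0 := by simp; omega
  rw [← mul_prod_erase _ _ h0, ← mul_prod_erase _ _ h1,
    ← mul_prod_erase (range r) (fun j => F j (a j)) h0,
    ← mul_prod_erase _ (fun j => F j (a j)) h1]
  have : ∏ x ∈ ((range r).erase 0).erase i, F x (shiftVec a i x)
      = ∏ x ∈ ((range r).erase 0).erase i, F x (a x) := by
    refine prod_congr rfl fun x hx => ?_
    simp only [mem_erase] at hx
    simp [shiftVec, hx.1, hx.2.1]
  rw [this]
  have e0 : shiftVec a i 0 = a 0 - 1 := by simp [shiftVec]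
  have ei : shiftVec a i i = a i + 1 := by simp [shiftVec, show i ≠ 0 by omega]
  rw [e0, ei]
  simp only [mul_assoc, mul_comm, mul_left_comm]

lemma shift_sum (r i : ℕ) (a : ℕ → ℕ) (hi : 1 ≤ i) (hir : i < r) (ha : 1 ≤ a 0) :
    ∑ j ∈ range r, shiftVec a i j = ∑ j ∈ range r, a j := by
  have := shift_prod (M := Multiplicative ℕ) r i a hi hir (fun _ m => Multiplicative.ofAdd m)
  have h := congrArg Multiplicative.toAdd this
  simp only [toAdd_mul, toAdd_prod, toAdd_ofAdd] at h
  omega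

lemma aux_bound (r m : ℕ) (c : ℕ → ℕ) (hc : ∑ j ∈ range r, c j = m) (N : ℕ → ℕ) (p : ℕ → ℝ)
    (B : ℝ) (hN : ∀ j < r, (N j : ℝ) ≤ B * p j) :
    ((∏ j ∈ range r, (N j).choose (c j) : ℕ) : ℝ) ≤
      B ^ m * ∏ j ∈ range r, (p j ^ c j / ((c j).factorial : ℝ)) := by
  rw [← hc, ← prod_pow_eq_pow_sum, ← prod_mul_distrib]
  push_cast
  refine prod_le_prod (fun _ _ => by positivity) fun j hj => ?_
  refine (Nat.choose_le_pow_div _ _).trans ?_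
  rw [← mul_div_assoc, ← mul_pow]
  gcongr
  exact hN j (mem_range.1 hj)

lemma deg_bound {n : ℕ} (r m : ℕ) (hr : 2 ≤ r) (a : ℕ → ℕ) (hm : ∑ j ∈ range r, a j = m)
    (P : ℕ → Finset (Fin n)) (v : Fin n) (hv : v ∈ P 0)
    (hdis : ∀ i j : ℕ, i < r → j < r → i ≠ j → Disjoint (P i) (P j))
    (hcov : ∀ x : Fin n, ∃ i, i < r ∧ x ∈ P i) (p : ℕ → ℝ) (hp : ∀ j, 0 < p j)
    (B : ℝ) (hB : 0 ≤ B) (hN : ∀ j < r, ((P j).card : ℝ) ≤ B * p j) :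
    (hdeg (HVa r P a) v : ℝ) ≤ B ^ m * ((∏ j ∈ range r, (p j ^ a j / ((a j).factorial : ℝ))) *
      (1 + (a 0 : ℝ) / p 0 * ∑ i ∈ Ico 1 r, p i / (a i + 1))) := by
  classical
  set S : ℕ → Finset (Finset (Fin n)) := fun i => univ.filter (fun e => v ∈ e ∧
    (e ∩ P i).card = a i + 1 ∧ ∀ j ∈ range r, j ≠ i → (e ∩ P j).card = a j) with hS
  have hsub : (HVa r P a).filter (fun e => v ∈ e) ⊆ (range r).biUnion S := by
    intro e he
    simp only [HVa, mem_filter] at he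
    obtain ⟨⟨_, i, hi, h1, h2⟩, h3⟩ := he
    simp only [mem_biUnion, hS, mem_filter, mem_univ, true_and]
    exact ⟨i, hi, h3, h1, h2⟩
  have hdeg1 : hdeg (HVa r P a) v ≤ ∑ i ∈ range r, (S i).card :=
    (card_le_card hsub).trans card_biUnion_le
  have hsplit : ∑ i ∈ range r, (S i).card = (S 0).card + ∑ i ∈ Ico 1 r, (S i).card := by
    rw [range_eq_Ico, sum_eq_sum_Ico_succ_bot (by omega)]
  -- erase facts
  have her0 : ∀ e : Finset (Fin n), v ∈ e → (e.erase v ∩ P 0).card = (e ∩ P 0).card - 1 := by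
    intro e he
    rw [erase_inter, card_erase_of_mem (mem_inter.2 ⟨he, hv⟩)]
  have herj : ∀ e : Finset (Fin n), ∀ j < r, j ≠ 0 → (e.erase v ∩ P j).card = (e ∩ P j).card := by
    intro e j hj hj0
    rw [erase_inter, erase_eq_of_notMem]
    intro h
    exact (disjoint_left.1 (hdis 0 j (by omega) hj hj0.symm) hv) (mem_inter.1 h).2
  set A := ∏ j ∈ range r, (p j ^ a j / ((a j).factorial : ℝ)) with hA
  have hA0 : 0 ≤ A := prod_nonneg fun j _ => by have := hp j; positivity
  have hS0 : ((S 0).card : ℝ) ≤ B ^ m * A := by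
    refine le_trans ?_ (aux_bound r m a hm (fun j => (P j).card) p B hN)
    refine Nat.cast_le.2 (aux_count r P v a hcov (S 0) ?_)
    intro e he
    simp only [hS, mem_filter, mem_univ, true_and] at he
    refine ⟨he.1, fun j hj => ?_⟩
    by_cases h : j = 0
    · subst h; rw [her0 e he.1, he.2.1]; rfl
    · rw [herj e j hj h, he.2.2 j (mem_range.2 hj) h]
  have hSi : ∀ i ∈ Ico 1 r, ((S i).card : ℝ) ≤ B ^ m * (A * ((a 0 : ℝ) / p 0 * (p i / (a i + 1)))) := by
    intro i hi
    rw [mem_Ico] at hi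
    rcases Nat.eq_zero_or_pos (a 0) with h0 | h0
    · have : S i = ∅ := by
        refine eq_empty_of_forall_notMem fun e he => ?_
        simp only [hS, mem_filter, mem_univ, true_and] at he
        have h := he.2.2 0 (mem_range.2 (by omega)) (by omega)
        rw [h0, card_eq_zero] at h
        have : v ∈ e ∩ P 0 := mem_inter.2 ⟨he.1, hv⟩
        simp [h] at this
      simp [this, h0]
    · have key := aux_bound r m (shiftVec a i) ((shift_sum r i a hi.1 hi.2 h0).trans hm)
        (fun j => (P j).card) p B hN
      have hcnt : (S i).card ≤ ∏ j ∈ range r, (P j).card.choose (shiftVec a i j) := by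
        refine aux_count r P v _ hcov (S i) ?_
        intro e he
        simp only [hS, mem_filter, mem_univ, true_and] at he
        refine ⟨he.1, fun j hj => ?_⟩
        by_cases h : j = 0
        · subst h; rw [her0 e he.1, he.2.2 0 (mem_range.2 hj) (by omega)]; simp [shiftVec]
        · rw [herj e j hj h]
          by_cases h' : j = i
          · subst h'; rw [he.2.1]; simp [shiftVec, h]
          · rw [he.2.2 j (mem_range.2 hj) h']; simp [shiftVec, h, h']
      refine (Nat.cast_le.2 hcnt).trans (key.trans (le_of_eq ?_))
      congr 1
      have hs := shift_prod r i a hi.1 hi.2 (fun j c => p j ^ c / ((c.factorial : ℕ) : ℝ))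
      obtain ⟨b, hb⟩ : ∃ b, a 0 = b + 1 := ⟨a 0 - 1, by omega⟩
      have hp0 := hp 0
      have hpi := hp i
      have hne : p 0 ^ a 0 / ((a 0).factorial : ℝ) * (p i ^ a i / ((a i).factorial : ℝ)) ≠ 0 := by
        positivity
      apply mul_right_cancel₀ hne
      rw [hs, mul_assoc]
      congr 1
      rw [hb, Nat.add_sub_cancel, Nat.factorial_succ, Nat.factorial_succ]
      push_cast
      have f1 : ((b.factorial : ℕ) : ℝ) ≠ 0 := by positivity
      have f2 : (((a i).factorial : ℕ) : ℝ) ≠ 0 := by positivity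
      have f3 : (b:ℝ) + 1 ≠ 0 := by positivity
      have f4 : (a i:ℝ) + 1 ≠ 0 := by positivity
      field_simp
      ring
  calc (hdeg (HVa r P a) v : ℝ) ≤ ((∑ i ∈ range r, (S i).card : ℕ) : ℝ) := Nat.cast_le.2 hdeg1
    _ = (S 0).card + ∑ i ∈ Ico 1 r, ((S i).card : ℝ) := by rw [hsplit]; push_cast; rfl
    _ ≤ B ^ m * A + ∑ i ∈ Ico 1 r, B ^ m * (A * ((a 0 : ℝ) / p 0 * (p i / (a i + 1)))) :=
        add_le_add hS0 (sum_le_sum hSi)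
    _ = _ := by rw [← mul_sum, ← mul_sum, ← mul_sum]; ring

theorem min_degree_perturbed_upper (k r : ℕ) (hk : 3 ≤ k) (hr : 2 ≤ r) (a : ℕ → ℕ)
    (ha : IsVec k r a) (θ : ℝ) (hθ : 0 < θ) :
    ∃ n₀ : ℕ, ∀ n : ℕ, n₀ ≤ n → ∀ P : ℕ → Finset (Fin n), ∀ ε : ℕ → ℝ,
      (∀ i j : ℕ, i < r → j < r → i ≠ j → Disjoint (P i) (P j)) →
      (∀ x : Fin n, ∃ i, i < r ∧ x ∈ P i) →
      (∀ i, i < r →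
        ((P i).card : ℝ) = (1 + ε i) * ((r * a i + 1 : ℕ) : ℝ) * (n : ℝ) / ((r * k : ℕ) : ℝ)) →
      ((Finset.range r).sup' (Finset.nonempty_range_iff.mpr (by omega)) fun i => |ε i|) ≤
          1 / (2 * (k : ℝ)) →
      (minDeg (HVa r P a) : ℝ) ≤
        (1 + 4 * (k : ℝ) *
            ((Finset.range r).sup' (Finset.nonempty_range_iff.mpr (by omega)) fun i => |ε i|) + θ) *
          (((n - 1).choose (k - 1) : ℕ) : ℝ) * gfun k r a := by
  obtain ⟨n₀, hn₀⟩ := aux_choose (k - 1) (θ / 2) (by linarith)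
  refine ⟨n₀, fun n hn P ε hdis hcov hcard hE => ?_⟩
  obtain ⟨hn1, hpow⟩ := hn₀ n hn
  set E := (Finset.range r).sup' (Finset.nonempty_range_iff.mpr (by omega)) fun i => |ε i| with hEdef
  have hle : ∀ i < r, |ε i| ≤ E := fun i hi =>
    Finset.le_sup' (fun i => |ε i|) (mem_range.2 hi)
  have hE0 : 0 ≤ E := (abs_nonneg _).trans (hle 0 (by omega))
  have hk0 : (0:ℝ) < k := by exact_mod_cast (by omega : 0 < k)
  have hr0 : (0:ℝ) < r := by exact_mod_cast (by omega : 0 < r)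
  have hn0 : (0:ℝ) < n := by exact_mod_cast hn1
  have hk3 : (3:ℝ) ≤ k := by exact_mod_cast hk
  have hkE : (k:ℝ) * E ≤ 1 / 2 := by
    rw [le_div_iff₀ (by positivity)] at hE
    linarith
  set p : ℕ → ℝ := fun j => ((r * a j + 1 : ℕ) : ℝ) / ((r * k : ℕ) : ℝ) with hp
  have hppos : ∀ j, 0 < p j := fun j => by
    simp only [hp]; push_cast; positivity
  have hcard' : ∀ i, i < r → ((P i).card : ℝ) = (1 + ε i) * p i * n := fun i hi => by
    rw [hcard i hi]; simp only [hp]; ring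
  have hP0 : (P 0).Nonempty := by
    rw [← Finset.card_pos, ← Nat.cast_pos (α := ℝ), hcard' 0 (by omega)]
    have h1 := neg_abs_le (ε 0)
    have h2 := hle 0 (by omega)
    have h3 : 0 < 1 + ε 0 := by nlinarith
    have := hppos 0
    positivity
  obtain ⟨v, hv⟩ := hP0
  have hmin : minDeg (HVa r P a) ≤ hdeg (HVa r P a) v := Nat.sInf_le ⟨v, rfl⟩
  have hdb := deg_bound r (k - 1) hr a ha.2 P v hv hdis hcov p hppos ((1 + E) * n) (by positivity)
    (fun j hj => by
      rw [hcard' j hj]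
      have h1 := (le_abs_self (ε j)).trans (hle j hj)
      have := hppos j
      calc (1 + ε j) * p j * n ≤ (1 + E) * p j * n := by gcongr
        _ = _ := by ring)
  set G := (∏ j ∈ range r, (p j ^ a j / ((a j).factorial : ℝ))) *
      (1 + (a 0 : ℝ) / p 0 * ∑ i ∈ Ico 1 r, p i / (a i + 1)) with hG
  have hG0 : 0 ≤ G := by
    have h1 : 0 ≤ ∑ i ∈ Ico 1 r, p i / (a i + 1) :=
      sum_nonneg fun i _ => by have := hppos i; positivity
    have h2 : 0 ≤ ∏ j ∈ range r, (p j ^ a j / ((a j).factorial : ℝ)) :=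
      prod_nonneg fun j _ => by have := hppos j; positivity
    have := hppos 0
    positivity
  have hg : gfun k r a = ((k - 1).factorial : ℝ) * G := by
    simp only [gfun, hG]
    rw [prod_div_distrib]
    have : (a 0 : ℝ) / p 0 * ∑ i ∈ Ico 1 r, p i / (a i + 1) =
        (a 0 : ℝ) / ((r * a 0 + 1 : ℕ) : ℝ) *
          ∑ i ∈ Ico 1 r, ((r * a i + 1 : ℕ) : ℝ) / ((a i + 1 : ℕ) : ℝ) := by
      rw [mul_sum, mul_sum]
      refine sum_congr rfl fun i _ => ?_
      simp only [hp]; push_cast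
      field_simp
    rw [this]
    ring
  have hpE := aux_pow (k - 1) k (by omega) E hE0 hkE
  rw [hg]
  set C := (((n - 1).choose (k - 1) : ℕ) : ℝ) with hC
  set K := ((k - 1).factorial : ℝ) with hK
  have hCK : 0 ≤ C * K := by positivity
  calc (minDeg (HVa r P a) : ℝ) ≤ hdeg (HVa r P a) v := Nat.cast_le.2 hmin
    _ ≤ ((1 + E) * n) ^ (k - 1) * G := hdb
    _ = (1 + E) ^ (k - 1) * (n:ℝ) ^ (k - 1) * G := by rw [mul_pow]
    _ ≤ (1 + 2 * k * E) * ((1 + θ / 2) * C * K) * G := by gcongr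
    _ = ((1 + 2 * k * E) * (1 + θ / 2)) * (C * K) * G := by ring
    _ ≤ (1 + 4 * k * E + θ) * (C * K) * G := by
        have hkE0 : 0 ≤ (k:ℝ) * E := by positivity
        gcongr
        nlinarith
    _ = _ := by ring
end
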